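/- Let c ∈ ℝ and k ∈ ℝ, and let a, b : (0,1) → ℝ be functions with a(u) < 0 for all u, a(u) → -∞ as u → 0⁺, and b(u)/a(u) → k as u → 0⁺. Set v(u) = (a(u)·(1+c²) + c·b(u))/√(1+c²) and I(u) = ∫_{-∞}^{a(u)} Φ(x)·(2π)^{-1/2}·e^{-(c·x+b(u))²/2} dx. If v(u) → +∞ as u → 0⁺ (which forces 1+c²+c·k ≤ 0, so c·k < 0), then I(u) ~ √(1+c²)·e^{-b(u)²/(2(1+c²))} / (√(2π)·|a(u)|·|c·k|) as u → 0⁺, where f ~ g means f/g → 1. -/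

import Mathlib

/-!
Completing the square, `x² + (c x + b)² = y² + b² / (1 + c²)` for
`x = y / √(1 + c²) - c b / (1 + c²)`, and the half-line `x ≤ a(u)` becomes `y ≤ v(u)`.
Write `Φ(x) = R(x) φ(x) / |x|` with the normalised Mills ratio `R`. After division by the claimed
asymptotic equivalent, the integral becomes
`∫_{y ≤ v(u)} |c k| / (1 + c²) · φ(y) · R(x) · (a(u) / x) dy`.
On the domain `R(x) ≤ 1` and `a(u) / x ≤ 1`, so the integrand is dominated by a multiple of `φ`.
For fixed `y`, one has `x → -∞`, `R(x) → 1` and `a(u) / x → (1 + c²) / |c k|`, so the integrand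
tends to `φ(y)`, and dominated convergence gives the limit `1`.

The two facts about `R` are `millsRatio_le_one` (from the Gaussian tail bound `stdNormalCDF_mul_neg_le`) and
`tendsto_millsRatio` (L'Hôpital).
-/

open Real Filter Topology MeasureTheory

/-- The standard normal cumulative distribution function. -/
noncomputable def stdNormalCDF (x : ℝ) : ℝ :=
  ∫ t in Set.Iic x, (Real.sqrt (2 * Real.pi))⁻¹ * Real.exp (-(t ^ 2) / 2)

/-- The standard normal density. -/
noncomputable def stdPDF (t : ℝ) : ℝ := (Real.sqrt (2 * Real.pi))⁻¹ * Real.exp (-(t ^ 2) / 2)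

/-- The Mills ratio normalised to tend to `1` at `-∞`: `R(x) = -x Φ(x) / φ(x)`. -/
noncomputable def millsRatio (x : ℝ) : ℝ := stdNormalCDF x * (-x) / stdPDF x

lemma stdPDF_pos (t : ℝ) : 0 < stdPDF t := by unfold stdPDF; positivity

lemma integrable_stdPDF : Integrable stdPDF := by
  have h := (integrable_exp_neg_mul_sq (b := 1 / 2) (by norm_num)).const_mul
    (Real.sqrt (2 * Real.pi))⁻¹
  refine h.congr (Eventually.of_forall fun t => ?_)
  simp only [stdPDF]
  congr 2
  ring

lemma integral_stdPDF : ∫ t, stdPDF t = 1 := by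
  have h : ∀ t : ℝ, stdPDF t = (Real.sqrt (2 * Real.pi))⁻¹ * Real.exp (-(1 / 2) * t ^ 2) := by
    intro t
    simp only [stdPDF]
    congr 2
    ring
  simp_rw [h]
  rw [integral_const_mul, integral_gaussian]
  have : π / (1 / 2) = 2 * π := by ring
  rw [this]
  exact inv_mul_cancel₀ (by positivity)

lemma hasDerivAt_stdPDF (t : ℝ) : HasDerivAt stdPDF (-t * stdPDF t) t := by
  have h : HasDerivAt (fun t : ℝ => -(t ^ 2) / 2) (-t) t := by
    refine (((hasDerivAt_pow 2 t).neg).div_const 2).congr_deriv ?_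
    push_cast
    ring
  refine ((h.exp).const_mul (Real.sqrt (2 * Real.pi))⁻¹).congr_deriv ?_
  unfold stdPDF
  ring

lemma continuous_stdPDF : Continuous stdPDF :=
  continuous_iff_continuousAt.2 fun t => (hasDerivAt_stdPDF t).continuousAt

lemma tendsto_stdPDF_atBot : Tendsto stdPDF atBot (𝓝 0) := by
  have h : Tendsto (fun t : ℝ => -(t ^ 2) / 2) atBot atBot := by
    have h2 : Tendsto (fun t : ℝ => t ^ 2) atBot atTop := by
      simpa [sq] using tendsto_id.atBot_mul_atBot₀ (tendsto_id (α := ℝ) (x := atBot))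
    exact (tendsto_neg_atTop_atBot.comp h2).atBot_div_const (by norm_num)
  have h3 := (Real.tendsto_exp_atBot.comp h).const_mul (Real.sqrt (2 * Real.pi))⁻¹
  rw [mul_zero] at h3
  exact h3

lemma stdNormalCDF_eq (x : ℝ) : stdNormalCDF x = ∫ t in Set.Iic x, stdPDF t := rfl

lemma stdNormalCDF_nonneg (x : ℝ) : 0 ≤ stdNormalCDF x := by
  rw [stdNormalCDF_eq]
  exact integral_nonneg fun t => (stdPDF_pos t).le

lemma hasDerivAt_stdNormalCDF (x : ℝ) : HasDerivAt stdNormalCDF (stdPDF x) x := by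
  have h : stdNormalCDF = fun y => stdNormalCDF 0 + ∫ t in (0 : ℝ)..y, stdPDF t := by
    funext y
    rw [← intervalIntegral.integral_Iic_sub_Iic integrable_stdPDF.integrableOn
      integrable_stdPDF.integrableOn, stdNormalCDF_eq, stdNormalCDF_eq]
    ring
  rw [h]
  exact (continuous_stdPDF.integral_hasStrictDerivAt 0 x).hasDerivAt.const_add _

/-- Gaussian tail bound: `-x ≤ -t` for `t ≤ x`, and `-t φ(t)` is the derivative of `φ`. -/
lemma stdNormalCDF_mul_neg_le (x : ℝ) : stdNormalCDF x * (-x) ≤ stdPDF x := by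
  have hint : IntegrableOn (fun t => -t * stdPDF t) (Set.Iic x) := by
    have h := ((integrable_mul_exp_neg_mul_sq (b := 1 / 2) (by norm_num)).const_mul
      (-(Real.sqrt (2 * Real.pi))⁻¹))
    refine (h.congr (Eventually.of_forall fun t => ?_)).integrableOn
    have : -(1 / 2) * t ^ 2 = -(t ^ 2) / 2 := by ring
    simp only [stdPDF, this]
    ring
  have h1 : ∫ t in Set.Iic x, -t * stdPDF t = stdPDF x := by
    have := integral_Iic_of_hasDerivAt_of_tendsto' (a := x) (fun t _ => hasDerivAt_stdPDF t) hint
      tendsto_stdPDF_atBot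
    simpa using this
  rw [← h1, stdNormalCDF_eq, ← integral_mul_const]
  refine setIntegral_mono_on (integrable_stdPDF.integrableOn.mul_const _) hint
    measurableSet_Iic fun t ht => ?_
  have : t ≤ x := ht
  nlinarith [stdPDF_pos t]

lemma millsRatio_le_one (x : ℝ) : millsRatio x ≤ 1 := by
  rw [millsRatio, div_le_one (stdPDF_pos x)]
  exact stdNormalCDF_mul_neg_le x

lemma millsRatio_nonneg (x : ℝ) (hx : x < 0) : 0 ≤ millsRatio x :=
  div_nonneg (mul_nonneg (stdNormalCDF_nonneg x) (by linarith)) (stdPDF_pos x).le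

lemma tendsto_stdPDF_div : Tendsto (fun x => stdPDF x / (-x)) atBot (𝓝 0) :=
  tendsto_stdPDF_atBot.div_atTop tendsto_neg_atBot_atTop

lemma tendsto_stdNormalCDF_atBot : Tendsto stdNormalCDF atBot (𝓝 0) := by
  refine tendsto_of_tendsto_of_tendsto_of_le_of_le' tendsto_const_nhds tendsto_stdPDF_div
    (Eventually.of_forall stdNormalCDF_nonneg) ?_
  filter_upwards [eventually_lt_atBot 0] with x hx
  rw [le_div_iff₀ (by linarith)]
  exact stdNormalCDF_mul_neg_le x

/-- L'Hôpital for `Φ(x) / (φ(x) / (-x))`: the quotient of the derivatives is `(1 + x⁻²)⁻¹`. -/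
lemma tendsto_millsRatio : Tendsto millsRatio atBot (𝓝 1) := by
  have hG : ∀ᶠ x : ℝ in atBot, HasDerivAt (fun x => stdPDF x / (-x))
      (stdPDF x * (1 + (x ^ 2)⁻¹)) x := by
    filter_upwards [eventually_lt_atBot 0] with x hx
    refine ((hasDerivAt_stdPDF x).div (hasDerivAt_neg x) (by linarith)).congr_deriv ?_
    have := hx.ne
    field_simp
    ring
  have hlim : Tendsto (fun x : ℝ => stdPDF x / (stdPDF x * (1 + (x ^ 2)⁻¹))) atBot (𝓝 1) := by
    have h2 : Tendsto (fun t : ℝ => t ^ 2) atBot atTop := by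
      simpa [sq] using tendsto_id.atBot_mul_atBot₀ (tendsto_id (α := ℝ) (x := atBot))
    have h3 : Tendsto (fun x : ℝ => (1 + (x ^ 2)⁻¹)⁻¹) atBot (𝓝 1) := by
      have := ((tendsto_inv_atTop_zero.comp h2).const_add 1).inv₀ (by norm_num)
      simpa using this
    refine h3.congr fun x => ?_
    have := (stdPDF_pos x).ne'
    have h4 : 1 + (x ^ 2)⁻¹ ≠ 0 := by positivity
    rw [div_mul_eq_div_div, div_self this, one_div]
  have := HasDerivAt.lhopital_zero_atBot (Eventually.of_forall hasDerivAt_stdNormalCDF) hG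
    (Eventually.of_forall fun x => by have := stdPDF_pos x; positivity)
    tendsto_stdNormalCDF_atBot tendsto_stdPDF_div hlim
  refine this.congr fun x => ?_
  rw [millsRatio, div_div_eq_mul_div]

/-- Completing the square in the product of the two densities. -/
lemma stdPDF_mul_stdPDF (c b s y : ℝ) (hs : 0 < s) (hs2 : s ^ 2 = 1 + c ^ 2) :
    stdPDF (s⁻¹ * y - c * b / s ^ 2) * stdPDF (c * (s⁻¹ * y - c * b / s ^ 2) + b) =
      stdPDF y * (Real.sqrt (2 * Real.pi))⁻¹ * Real.exp (-b ^ 2 / (2 * (1 + c ^ 2))) := by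
  have h : -((s⁻¹ * y - c * b / s ^ 2) ^ 2) / 2
      + -((c * (s⁻¹ * y - c * b / s ^ 2) + b) ^ 2) / 2
      = -(y ^ 2) / 2 + -b ^ 2 / (2 * (1 + c ^ 2)) := by
    rw [← hs2]
    field_simp
    have : c ^ 2 = s ^ 2 - 1 := by linarith
    ring_nf
    have h4 : c ^ 4 = (s ^ 2 - 1) ^ 2 := by rw [← this]; ring
    have h3 : c ^ 3 = c * (s ^ 2 - 1) := by rw [← this]; ring
    rw [h4, h3, this]
    ring
  have h' := congrArg Real.exp h
  rw [Real.exp_add, Real.exp_add] at h'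
  unfold stdPDF
  linear_combination (Real.sqrt (2 * Real.pi))⁻¹ ^ 2 * h'

/-- The ratio of the integral to its equivalent, in the variable `y` of the completed square. -/
lemma ratio_eq (c k a b s : ℝ) (hs : 0 < s) (hs2 : s ^ 2 = 1 + c ^ 2) (ha : a < 0) :
    (∫ x in Set.Iic a, stdNormalCDF x * stdPDF (c * x + b)) /
      (s * Real.exp (-b ^ 2 / (2 * (1 + c ^ 2))) / (Real.sqrt (2 * Real.pi) * |a| * |c * k|)) =
    ∫ y, (Set.Iic a).indicator
      (fun x => |c * k| / s ^ 2 * stdPDF y * (millsRatio x * (a / x)))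
      (s⁻¹ * y - c * b / s ^ 2) := by
  set h : ℝ → ℝ := (Set.Iic a).indicator fun x => stdNormalCDF x * stdPDF (c * x + b) with hh
  have e1 : ∫ x in Set.Iic a, stdNormalCDF x * stdPDF (c * x + b) = ∫ x, h x :=
    (integral_indicator measurableSet_Iic).symm
  have e2 : ∫ x, h x = s⁻¹ * ∫ y, h (s⁻¹ * y - c * b / s ^ 2) := by
    rw [Measure.integral_comp_mul_left (fun z => h (z - c * b / s ^ 2)) s⁻¹,
      integral_sub_right_eq_self h, inv_inv, abs_of_pos hs, smul_eq_mul,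
      inv_mul_cancel_left₀ hs.ne']
  rw [e1, e2, div_eq_mul_inv, mul_comm, ← mul_assoc, ← integral_const_mul]
  congr 1
  funext y
  by_cases hx : s⁻¹ * y - c * b / s ^ 2 ∈ Set.Iic a
  · rw [hh, Set.indicator_of_mem hx, Set.indicator_of_mem hx]
    have hx' : s⁻¹ * y - c * b / s ^ 2 < 0 := lt_of_le_of_lt hx ha
    have key := stdPDF_mul_stdPDF c b s y hs hs2
    revert hx' key
    generalize s⁻¹ * y - c * b / s ^ 2 = x
    intro hx' key
    have hp := stdPDF_pos x
    have hE := Real.exp_pos (-b ^ 2 / (2 * (1 + c ^ 2)))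
    have hq : 0 < Real.sqrt (2 * Real.pi) := by positivity
    have hx0 := hx'.ne
    have key' : stdPDF (c * x + b) = stdPDF y * (Real.sqrt (2 * Real.pi))⁻¹ *
        Real.exp (-b ^ 2 / (2 * (1 + c ^ 2))) / stdPDF x := by
      rw [eq_div_iff hp.ne', ← key]; ring
    rw [key', millsRatio, abs_of_neg ha]
    generalize Real.exp (-b ^ 2 / (2 * (1 + c ^ 2))) = E at *
    generalize Real.sqrt (2 * Real.pi) = q at *
    rw [inv_div]
    field_simp
  · rw [hh, Set.indicator_of_notMem hx, Set.indicator_of_notMem hx, mul_zero]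

lemma measurable_millsRatio : Measurable millsRatio := by
  have h : Continuous stdNormalCDF :=
    continuous_iff_continuousAt.2 fun t => (hasDerivAt_stdNormalCDF t).continuousAt
  exact (h.measurable.mul measurable_neg).div continuous_stdPDF.measurable

/-- Theorem 1 of the paper, case `v(u) → +∞` (which forces `1+c²+c·k ≤ 0`,
so `c·k < 0`). -/
theorem integral_asymptotics_v_atTop (c k : ℝ) (a b : ℝ → ℝ)
    (ha_neg : ∀ u ∈ Set.Ioo (0 : ℝ) 1, a u < 0)
    (ha : Tendsto a (𝓝[>] (0 : ℝ)) atBot)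
    (hb : Tendsto (fun u => b u / a u) (𝓝[>] (0 : ℝ)) (𝓝 k))
    (hv : Tendsto (fun u => (a u * (1 + c ^ 2) + c * b u) / Real.sqrt (1 + c ^ 2))
      (𝓝[>] (0 : ℝ)) atTop) :
    1 + c ^ 2 + c * k ≤ 0 ∧ c * k < 0 ∧
    Tendsto (fun u =>
      (∫ x in Set.Iic (a u),
          stdNormalCDF x * ((Real.sqrt (2 * Real.pi))⁻¹ *
            Real.exp (-(c * x + b u) ^ 2 / 2))) /
      (Real.sqrt (1 + c ^ 2) * Real.exp (-(b u) ^ 2 / (2 * (1 + c ^ 2))) /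
        (Real.sqrt (2 * Real.pi) * |a u| * |c * k|)))
      (𝓝[>] (0 : ℝ)) (𝓝 1) := by
  have hs : 0 < Real.sqrt (1 + c ^ 2) := by positivity
  have hs2 : Real.sqrt (1 + c ^ 2) ^ 2 = 1 + c ^ 2 := Real.sq_sqrt (by positivity)
  revert hv hs hs2
  generalize Real.sqrt (1 + c ^ 2) = s
  intro hv hs hs2
  have hane : ∀ᶠ u in 𝓝[>] (0 : ℝ), a u < 0 := ha.eventually (eventually_lt_atBot 0)
  have h1 : 1 + c ^ 2 + c * k ≤ 0 := by
    -- `1 + c² + c b / a` has the sign of `v / a`, which is eventually negative.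
    refine le_of_tendsto ((hb.const_mul c).const_add (1 + c ^ 2)) ?_
    filter_upwards [hane, hv.eventually (eventually_gt_atTop 0)] with u hu hvu
    have hpos : 0 < a u * (1 + c ^ 2) + c * b u := (div_pos_iff_of_pos_right hs).1 hvu
    have : 1 + c ^ 2 + c * (b u / a u) = (a u * (1 + c ^ 2) + c * b u) / a u := by
      have := hu.ne
      field_simp
    rw [this]
    exact (div_neg_of_pos_of_neg hpos hu).le
  have hck : c * k < 0 := by nlinarith [sq_nonneg c]
  refine ⟨h1, hck, ?_⟩
  have hmain : Tendsto (fun u => ∫ y, (Set.Iic (a u)).indicator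
      (fun x => |c * k| / s ^ 2 * stdPDF y * (millsRatio x * (a u / x)))
      (s⁻¹ * y - c * b u / s ^ 2)) (𝓝[>] (0 : ℝ)) (𝓝 (∫ y, stdPDF y)) := by
    refine tendsto_integral_filter_of_dominated_convergence
      (fun y => |c * k| / s ^ 2 * stdPDF y) ?_ ?_ (integrable_stdPDF.const_mul _) ?_
    · refine Eventually.of_forall fun u => Measurable.aestronglyMeasurable ?_
      have hX : Measurable fun y : ℝ => s⁻¹ * y - c * b u / s ^ 2 := by fun_prop
      have hF : Measurable fun y : ℝ => |c * k| / s ^ 2 * stdPDF y *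
          (millsRatio (s⁻¹ * y - c * b u / s ^ 2) * (a u / (s⁻¹ * y - c * b u / s ^ 2))) :=
        (continuous_stdPDF.measurable.const_mul _).mul
          ((measurable_millsRatio.comp hX).mul (hX.const_div _))
      exact hF.indicator (hX measurableSet_Iic)
    · filter_upwards [hane] with u hu
      refine Eventually.of_forall fun y => ?_
      have hP : 0 ≤ |c * k| / s ^ 2 * stdPDF y := by
        have := stdPDF_pos y
        positivity
      by_cases hx : s⁻¹ * y - c * b u / s ^ 2 ∈ Set.Iic (a u)
      · rw [Set.indicator_of_mem hx]
        have hxa : s⁻¹ * y - c * b u / s ^ 2 ≤ a u := hx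
        have hx0 := lt_of_le_of_lt hxa hu
        have hd0 : 0 ≤ a u / (s⁻¹ * y - c * b u / s ^ 2) := div_nonneg_of_nonpos hu.le hx0.le
        have hd1 : a u / (s⁻¹ * y - c * b u / s ^ 2) ≤ 1 := (div_le_one_of_neg hx0).2 hxa
        have hm0 := millsRatio_nonneg _ hx0
        rw [Real.norm_of_nonneg (mul_nonneg hP (mul_nonneg hm0 hd0))]
        exact mul_le_of_le_one_right hP (mul_le_one₀ (millsRatio_le_one _) hd0 hd1)
      · rw [Set.indicator_of_notMem hx, norm_zero]
        exact hP
    · refine Eventually.of_forall fun y => ?_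
      -- `x ≤ a u` is equivalent to `y ≤ v u`, which holds eventually since `v u → ∞`.
      have hle : ∀ᶠ u in 𝓝[>] (0 : ℝ), s⁻¹ * y - c * b u / s ^ 2 ≤ a u := by
        filter_upwards [hv.eventually (eventually_ge_atTop y)] with u hu
        rw [← hs2, le_div_iff₀ hs] at hu
        rw [← sub_nonneg]
        have : a u - (s⁻¹ * y - c * b u / s ^ 2) = (a u * s ^ 2 + c * b u - y * s) / s ^ 2 := by
          field_simp
          ring
        rw [this]
        exact div_nonneg (by linarith) (by positivity)
      have hx : Tendsto (fun u => s⁻¹ * y - c * b u / s ^ 2) (𝓝[>] (0 : ℝ)) atBot :=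
        tendsto_atBot_mono' _ hle ha
      have hq : Tendsto (fun u => a u / (s⁻¹ * y - c * b u / s ^ 2)) (𝓝[>] (0 : ℝ))
          (𝓝 (s ^ 2 / |c * k|)) := by
        have hinv : Tendsto (fun u => (s⁻¹ * y - c * b u / s ^ 2) / a u) (𝓝[>] (0 : ℝ))
            (𝓝 (0 - c / s ^ 2 * k)) := by
          refine ((ha.const_div_atBot (s⁻¹ * y)).sub (hb.const_mul (c / s ^ 2))).congr fun u => ?_
          ring
        have hne : 0 - c / s ^ 2 * k ≠ 0 := by
          have : 0 - c / s ^ 2 * k = -(c * k) / s ^ 2 := by ring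
          rw [this]
          exact (div_pos (by linarith) (by positivity)).ne'
        have := hinv.inv₀ hne
        have e : (0 - c / s ^ 2 * k)⁻¹ = s ^ 2 / |c * k| := by
          have : 0 - c / s ^ 2 * k = -(c * k) / s ^ 2 := by ring
          rw [abs_of_neg hck, this, inv_div]
        rw [e] at this
        exact this.congr fun u => inv_div _ _
      have hlim := (((tendsto_millsRatio.comp hx).mul hq).const_mul
        (|c * k| / s ^ 2 * stdPDF y))
      have e : |c * k| / s ^ 2 * stdPDF y * (1 * (s ^ 2 / |c * k|)) = stdPDF y := by
        have : |c * k| ≠ 0 := abs_ne_zero.2 hck.ne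
        field_simp
      rw [e] at hlim
      refine hlim.congr' ?_
      filter_upwards [hle] with u hu
      rw [Set.indicator_of_mem (show _ ∈ Set.Iic (a u) from hu)]
      rfl
  rw [integral_stdPDF] at hmain
  refine hmain.congr' ?_
  filter_upwards [hane] with u hu
  rw [← ratio_eq c k (a u) (b u) s hs hs2 hu]
  rfl
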